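/- A generalised clause-set F is matching lean with δ(F) = 1 if and only if F is minimally matching unsatisfiable, i.e., F is not matching satisfiable while every proper subset of F is matching satisfiable. -/

import Mathlib

open scoped Classical

namespace GCLS

variable {V α : Type} [DecidableEq V] [DecidableEq α]

/-- A finite "functional" set of (variable, value) pairs, with values inside the
given domains `D`; used both for clauses and for partial assignments. -/
def FinFn (D : V → Finset α) : Type :=
  { s : Finset (V × α) // (∀ p ∈ s, p.2 ∈ D p.1) ∧
      ∀ p ∈ s, ∀ q ∈ s, p.1 = q.1 → p = q }

variable {D : V → Finset α}

instance : DecidableEq (FinFn D) :=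
  fun a b => decidable_of_iff (a.1 = b.1) Subtype.ext_iff.symm

namespace FinFn

/-- The set of variables occurring. -/
def vars (s : FinFn D) : Finset V := s.1.image Prod.fst

/-- Restriction to the pairs whose variable lies in `W`. -/
def restrictVars (s : FinFn D) (W : Finset V) : FinFn D :=
  ⟨s.1.filter (fun p => p.1 ∈ W),
   fun p hp => s.2.1 p (Finset.mem_filter.mp hp).1,
   fun p hp q hq h =>
     s.2.2 p (Finset.mem_filter.mp hp).1 q (Finset.mem_filter.mp hq).1 h⟩

/-- Removal of a set of pairs. -/
def sdiff (s : FinFn D) (t : Finset (V × α)) : FinFn D :=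
  ⟨s.1 \ t,
   fun p hp => s.2.1 p (Finset.mem_sdiff.mp hp).1,
   fun p hp q hq h =>
     s.2.2 p (Finset.mem_sdiff.mp hp).1 q (Finset.mem_sdiff.mp hq).1 h⟩

end FinFn

/-- Clauses: finite sets of literals `(v,ε)` (meaning "v ≠ ε"), at most one literal
per variable, values inside the domains. -/
abbrev Clause (D : V → Finset α) := FinFn D

/-- Partial assignments: finitely many variables get values inside their domains. -/
abbrev PAssign (D : V → Finset α) := FinFn D

/-- `φ` satisfies the literal `(v,ε)` (i.e. "v ≠ ε"): `v` is assigned a value ≠ `ε`. -/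
def SatLit (φ : PAssign D) (l : V × α) : Prop :=
  ∃ ε, (l.1, ε) ∈ φ.1 ∧ ε ≠ l.2

/-- `φ` satisfies a clause iff it satisfies some literal of it. -/
def SatClause (φ : PAssign D) (C : Clause D) : Prop :=
  ∃ l ∈ C.1, SatLit φ l

/-- The clause obtained from `C` by deleting all literals falsified by `φ`. -/
def Clause.restrict (φ : PAssign D) (C : Clause D) : Clause D :=
  FinFn.sdiff C φ.1

/-- The operation `φ * F` on multi-clause-sets: remove all clauses satisfied by `φ`
and delete all falsified literals from the remaining clauses. -/
noncomputable def applyM (φ : PAssign D) (F : Multiset (Clause D)) : Multiset (Clause D) :=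
  (F.filter (fun C => ¬ SatClause φ C)).map (Clause.restrict φ)

/-- The operation `φ * F` on clause-sets (with contraction of equal clauses). -/
noncomputable def applyF (φ : PAssign D) (F : Finset (Clause D)) : Finset (Clause D) :=
  (F.filter (fun C => ¬ SatClause φ C)).image (Clause.restrict φ)

/-- Satisfiability: some partial assignment satisfies all clauses. -/
def Sat (F : Multiset (Clause D)) : Prop :=
  ∃ φ : PAssign D, applyM φ F = 0

/-- Minimal unsatisfiability of a clause-set. -/
def MinUnsat (F : Finset (Clause D)) : Prop :=
  ¬ Sat F.val ∧ ∀ F' ⊂ F, Sat F'.val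

/-- The variables of a multi-clause-set. -/
def mvars (F : Multiset (Clause D)) : Finset V := F.toFinset.sup FinFn.vars

/-- The deficiency `δ(F) = c(F) - Σ_{v ∈ var(F)} (|D_v| - 1)`. -/
def delta (F : Multiset (Clause D)) : ℤ :=
  (Multiset.card F : ℤ) - ∑ v ∈ mvars F, ((D v).card - 1 : ℤ)

lemma powerset_toFinset_nonempty (F : Multiset (Clause D)) :
    F.powerset.toFinset.Nonempty :=
  ⟨0, by simp⟩

/-- The maximal deficiency `δ*(F) = max {δ(F') : F' ≤ F}`. -/
noncomputable def deltaStar (F : Multiset (Clause D)) : ℤ :=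
  F.powerset.toFinset.sup' (powerset_toFinset_nonempty F) delta

/-- A tight sub-multi-clause-set: `F' ≤ F` with `δ(F') = δ*(F)`. -/
noncomputable def Tight (F F' : Multiset (Clause D)) : Prop :=
  F' ≤ F ∧ delta F' = deltaStar F

/-- `F` is matching satisfiable: the clause-variable graph `B(F)` has a matching
covering all clause-nodes.  Such a matching is encoded as a multiset `P` of pairs
(clause-occurrence, variable-node), where the variable-nodes `(v,k)`,
`k < |D v| - 1`, are the copies of the variable `v`; the matching covers each
clause-occurrence exactly once (`P.map Prod.fst = F`), uses pairwise distinct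
variable-nodes, and respects adjacency in `B(F)`. -/
def MatchingSat (F : Multiset (Clause D)) : Prop :=
  ∃ P : Multiset (Clause D × (V × ℕ)),
    P.map Prod.fst = F ∧ (P.map Prod.snd).Nodup ∧
    ∀ p ∈ P, p.2.1 ∈ FinFn.vars p.1 ∧ p.2.2 < (D p.2.1).card - 1

/-- The edge between clause `C` and the copies of variable `v` is retained in
`B_φ(F)`: the literal of `C` with variable `v` is satisfied by `φ`. -/
def EdgeSat (φ : PAssign D) (C : Clause D) (v : V) : Prop :=
  ∃ ε, (v, ε) ∈ C.1 ∧ SatLit φ (v, ε)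

/-- `φ` is matching-satisfying for `F`: `B_φ(F)` has a matching covering all
clause-nodes. -/
def MatchingSatisfying (φ : PAssign D) (F : Multiset (Clause D)) : Prop :=
  ∃ P : Multiset (Clause D × (V × ℕ)),
    P.map Prod.fst = F ∧ (P.map Prod.snd).Nodup ∧
    ∀ p ∈ P, p.2.2 < (D p.2.1).card - 1 ∧ EdgeSat φ p.1 p.2.1

/-- The maximum size of a matching in `B(F)`. -/
noncomputable def nu (F : Multiset (Clause D)) : ℕ :=
  sSup { k | ∃ P : Multiset (Clause D × (V × ℕ)),
    P.map Prod.fst ≤ F ∧ (P.map Prod.snd).Nodup ∧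
    (∀ p ∈ P, p.2.1 ∈ FinFn.vars p.1 ∧ p.2.2 < (D p.2.1).card - 1) ∧
    Multiset.card P = k }

/-- The maximum size of a matching in `B_φ(F)`. -/
noncomputable def nuSub (φ : PAssign D) (F : Multiset (Clause D)) : ℕ :=
  sSup { k | ∃ P : Multiset (Clause D × (V × ℕ)),
    P.map Prod.fst ≤ F ∧ (P.map Prod.snd).Nodup ∧
    (∀ p ∈ P, p.2.2 < (D p.2.1).card - 1 ∧ EdgeSat φ p.1 p.2.1) ∧
    Multiset.card P = k }

/-- `φ` is matching-maximum for `F`. -/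
noncomputable def MatchingMaximum (φ : PAssign D) (F : Multiset (Clause D)) : Prop :=
  nuSub φ F = nu F

/-- `φ` is an autarky for `F`: every clause touched by `φ` is satisfied by `φ`. -/
def IsAutarky (φ : PAssign D) (F : Multiset (Clause D)) : Prop :=
  ∀ C ∈ F, (FinFn.vars C ∩ FinFn.vars φ).Nonempty → SatClause φ C

/-- `F` is lean: it has no non-trivial autarky. -/
def IsLean (F : Multiset (Clause D)) : Prop :=
  ¬ ∃ φ : PAssign D, IsAutarky φ F ∧ (FinFn.vars φ ∩ mvars F).Nonempty

/-- The sub-multi-clause-set of clauses touched by the variables in `W`. -/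
noncomputable def touchedBy (F : Multiset (Clause D)) (W : Finset V) : Multiset (Clause D) :=
  F.filter (fun C => (FinFn.vars C ∩ W).Nonempty)

/-- The restriction `F[W]`: keep the clauses touching `W` and delete from them all
literals whose variable is not in `W`. -/
noncomputable def restrictTo (F : Multiset (Clause D)) (W : Finset V) : Multiset (Clause D) :=
  (touchedBy F W).map (fun C => FinFn.restrictVars C W)

/-- `φ` is a matching autarky for `F`: `φ` is matching-satisfying for the
sub-multi-clause-set of clauses touched by `φ`. -/
noncomputable def IsMatchingAutarky (φ : PAssign D) (F : Multiset (Clause D)) : Prop :=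
  MatchingSatisfying φ (touchedBy F (FinFn.vars φ))

/-- `F` is matching lean: no non-trivial matching autarky. -/
noncomputable def MatchingLean (F : Multiset (Clause D)) : Prop :=
  ¬ ∃ φ : PAssign D, IsMatchingAutarky φ F ∧ (FinFn.vars φ ∩ mvars F).Nonempty

lemma surp_nonempty {F : Multiset (Clause D)} (h : (mvars F).Nonempty) :
    ((mvars F).powerset.erase ∅).Nonempty := by
  obtain ⟨v, hv⟩ := h
  refine ⟨{v}, ?_⟩
  simp [Finset.mem_erase, Finset.singleton_subset_iff, hv]

/-- The surplus `surp(F) = min {δ(F[W]) : ∅ ≠ W ⊆ var(F)}` (and `0` if `var(F) = ∅`). -/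
noncomputable def surp (F : Multiset (Clause D)) : ℤ :=
  if h : (mvars F).Nonempty then
    ((mvars F).powerset.erase ∅).inf' (surp_nonempty h)
      (fun W => delta (restrictTo F W))
  else 0

/-- The number of occurrences of the literal `l` in `F`. -/
noncomputable def litCount (F : Multiset (Clause D)) (l : V × α) : ℕ :=
  Multiset.card (F.filter (fun C => l ∈ C.1))

/-- The number of occurrences `#_v(F)` of the variable `v` in `F`. -/
noncomputable def varCount (F : Multiset (Clause D)) (v : V) : ℕ :=
  ∑ ε ∈ D v, litCount F (v, ε)

/-- The partial assignment `⟨v → ε⟩`. -/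
def single (v : V) (ε : α) (hε : ε ∈ D v) : PAssign D :=
  ⟨{(v, ε)}, by
    refine ⟨?_, ?_⟩
    · intro p hp
      rw [Finset.mem_singleton] at hp
      subst hp; exact hε
    · intro p hp q hq _
      rw [Finset.mem_singleton] at hp hq
      subst hp; subst hq; rfl⟩

/-- Composition `φ ∘ ψ` of partial assignments: domain is the union of the domains,
`ψ` taking precedence. -/
def comp (φ ψ : PAssign D) : PAssign D :=
  ⟨ψ.1 ∪ φ.1.filter (fun p => p.1 ∉ FinFn.vars ψ), by
    constructor
    · intro p hp
      rcases Finset.mem_union.mp hp with h | h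
      · exact ψ.2.1 p h
      · exact φ.2.1 p (Finset.mem_filter.mp h).1
    · intro p hp q hq hpq
      rcases Finset.mem_union.mp hp with h1 | h1 <;>
        rcases Finset.mem_union.mp hq with h2 | h2
      · exact ψ.2.2 p h1 q h2 hpq
      · exact absurd (hpq ▸ Finset.mem_image_of_mem Prod.fst h1)
          (Finset.mem_filter.mp h2).2
      · exact absurd (hpq.symm ▸ Finset.mem_image_of_mem Prod.fst h2)
          (Finset.mem_filter.mp h1).2
      · exact φ.2.2 p (Finset.mem_filter.mp h1).1 q (Finset.mem_filter.mp h2).1 hpq⟩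

/-- Two clauses clash (in some variable). -/
def Clash (C C' : Clause D) : Prop :=
  ∃ v ε ε', (v, ε) ∈ C.1 ∧ (v, ε') ∈ C'.1 ∧ ε ≠ ε'

/-- The number of variables in which two clauses clash. -/
noncomputable def clashCount (C C' : Clause D) : ℕ :=
  ((FinFn.vars C).filter
    (fun v => ∃ ε ε', (v, ε) ∈ C.1 ∧ (v, ε') ∈ C'.1 ∧ ε ≠ ε')).card

/-- Hitting clause-sets: every two distinct clauses clash. -/
def Hitting (F : Finset (Clause D)) : Prop :=
  ∀ C ∈ F, ∀ C' ∈ F, C ≠ C' → Clash C C'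

/-- Boolean clauses over the boolean variables `V × α` (one boolean variable per
generalised literal; the value `false` gives the positive boolean literal). -/
abbrev BClause (V α : Type) :=
  Clause (fun _ : V × α => (Finset.univ : Finset Bool))

/-- The direct translation of a single clause: each literal `(v,ε)` is replaced by
the positive boolean literal of the boolean variable `(v,ε)`. -/
def dirClause (C : Clause D) : BClause V α :=
  ⟨C.1.image (fun p => (p, false)), by
    constructor
    · intro p _; exact Finset.mem_univ _
    · intro p hp q hq h
      simp only [Finset.mem_image] at hp hq
      obtain ⟨a, -, rfl⟩ := hp
      obtain ⟨b, -, rfl⟩ := hq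
      exact congrArg (fun x => (x, false)) h⟩

/-- The ALO-clause for a variable `v`: the negative boolean literals of the boolean
variables `(v,ε)` for `ε ∈ D v`. -/
def aloClause (D : V → Finset α) (v : V) : BClause V α :=
  ⟨(D v).image (fun ε => ((v, ε), true)), by
    constructor
    · intro p _; exact Finset.mem_univ _
    · intro p hp q hq h
      simp only [Finset.mem_image] at hp hq
      obtain ⟨a, -, rfl⟩ := hp
      obtain ⟨b, -, rfl⟩ := hq
      exact congrArg (fun x => (x, true)) h⟩

/-- The direct translation `Γ(F)`: the translated clauses together with the
ALO-clauses for all occurring variables. -/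
noncomputable def dirTrans (F : Finset (Clause D)) : Finset (BClause V α) :=
  F.image dirClause ∪ (mvars F.val).image (aloClause D)

/-!
By Hall's theorem `F` is matching satisfiable iff `δ(G) ≤ 0` for all `G ≤ F`.

If `G ≤ F` has maximal deficiency, then Hall's condition holds for the clauses of `F - G` and the
variables outside `var(G)`. Fewer than `|D_v|` clauses are matched to copies of a variable `v`, so
some value of `v` falsifies none of their literals; choosing such values turns the matching into a
matching autarky, which is non-trivial unless `G = F`. So in a matching lean `F` with `δ(F) = 1`
every proper part has deficiency at most `0`.

Conversely, a matching autarky reduces matching satisfiability of `F` to that of the clauses it does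
not touch, so a minimally matching unsatisfiable `F` is matching lean; its deficiency is positive by
Hall's theorem and at most `1` because dropping one clause lowers the deficiency by at most one.
-/

section CoveringMatching

variable {A B : Type*}

/-- The bipartite graph with edge relation `R` has a matching covering the left-hand nodes `F`,
which are counted with multiplicity. The matching is the multiset of its edges, as in
`MatchingSat`. -/
def HasCoveringMatching (R : A → B → Prop) (F : Multiset A) : Prop :=
  ∃ P : Multiset (A × B), P.map Prod.fst = F ∧ (P.map Prod.snd).Nodup ∧ ∀ p ∈ P, R p.1 p.2

lemma exists_le_map_eq_of_le_map {f : A → B} {P : Multiset A} {G : Multiset B}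
    (hG : G ≤ P.map f) : ∃ Q ≤ P, Q.map f = G := by
  induction P using Quotient.inductionOn with | _ l
  induction G using Quotient.inductionOn with | _ m
  obtain ⟨m', hperm, hsub⟩ : m.Subperm (l.map f) := hG
  obtain ⟨l', hl', rfl⟩ := List.sublist_map_iff.1 hsub
  exact ⟨l', hl'.subperm, Quotient.sound hperm⟩

namespace HasCoveringMatching

variable {R S : A → B → Prop} {F G : Multiset A}

lemma mono (hRS : ∀ a b, R a b → S a b) (hF : HasCoveringMatching R F) :
    HasCoveringMatching S F :=
  let ⟨P, hfst, hsnd, hadj⟩ := hF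
  ⟨P, hfst, hsnd, fun p hp => hRS _ _ (hadj p hp)⟩

lemma of_le (hF : HasCoveringMatching R F) (hGF : G ≤ F) : HasCoveringMatching R G := by
  obtain ⟨P, rfl, hsnd, hadj⟩ := hF
  obtain ⟨Q, hQP, rfl⟩ := exists_le_map_eq_of_le_map hGF
  exact ⟨Q, rfl, Multiset.nodup_of_le (Multiset.map_le_map hQP) hsnd,
    fun p hp => hadj p (Multiset.mem_of_le hQP hp)⟩

lemma exists_rel (hF : HasCoveringMatching R F) {a : A} (ha : a ∈ F) : ∃ b, R a b := by
  obtain ⟨P, rfl, -, hadj⟩ := hF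
  obtain ⟨p, hp, rfl⟩ := Multiset.mem_map.1 ha
  exact ⟨p.2, hadj p hp⟩

lemma add (hF : HasCoveringMatching R F) (hG : HasCoveringMatching S G)
    (hdisj : ∀ a ∈ F, ∀ c ∈ G, ∀ b, R a b → ¬ S c b) :
    HasCoveringMatching (R ⊔ S) (F + G) := by
  obtain ⟨P, rfl, hPsnd, hPadj⟩ := hF
  obtain ⟨Q, rfl, hQsnd, hQadj⟩ := hG
  refine ⟨P + Q, Multiset.map_add .., ?_, fun p hp => ?_⟩
  · rw [Multiset.map_add, Multiset.Nodup.add_iff hPsnd hQsnd, Multiset.disjoint_left]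
    intro b hbP hbQ
    obtain ⟨p, hp, rfl⟩ := Multiset.mem_map.1 hbP
    obtain ⟨q, hq, hqp⟩ := Multiset.mem_map.1 hbQ
    exact hdisj p.1 (Multiset.mem_map_of_mem _ hp) q.1 (Multiset.mem_map_of_mem _ hq) p.2
      (hPadj p hp) (hqp ▸ hQadj q hq)
  · exact (Multiset.mem_add.1 hp).imp (hPadj p) (hQadj p)

lemma card_le_card_biUnion [DecidableEq A] [DecidableEq B] {t : A → Finset B}
    (hF : HasCoveringMatching (fun a b => b ∈ t a) F) : F.card ≤ (F.toFinset.biUnion t).card := by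
  obtain ⟨P, rfl, hsnd, hadj⟩ := hF
  calc (P.map Prod.fst).card
    _ = (P.map Prod.snd).toFinset.card := by
      rw [Multiset.toFinset_card_of_nodup hsnd, Multiset.card_map, Multiset.card_map]
    _ ≤ ((P.map Prod.fst).toFinset.biUnion t).card := Finset.card_le_card fun b hb => by
      obtain ⟨p, hp, rfl⟩ := Multiset.mem_map.1 (Multiset.mem_toFinset.1 hb)
      exact Finset.mem_biUnion.2
        ⟨p.1, Multiset.mem_toFinset.2 (Multiset.mem_map_of_mem _ hp), hadj p hp⟩

end HasCoveringMatching

lemma hasCoveringMatching_of_forall_card_le [DecidableEq A] [DecidableEq B] {t : A → Finset B}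
    {F : Multiset A} (hall : ∀ G ≤ F, G.card ≤ (G.toFinset.biUnion t).card) :
    HasCoveringMatching (fun a b => b ∈ t a) F := by
  have hall_occurrences (s : Finset F) : s.card ≤ (s.biUnion fun i => t i.1).card := by
    have hle : s.val.map (fun i => i.1) ≤ F :=
      (Multiset.map_le_map (Finset.val_le_iff.2 s.subset_univ)).trans_eq F.map_univ_coe
    calc s.card
      _ = (s.val.map (fun i => i.1)).card := (Multiset.card_map _ _).symm
      _ ≤ ((s.val.map (fun i => i.1)).toFinset.biUnion t).card := hall _ hle
      _ = (s.biUnion fun i => t i.1).card := by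
        change ((s.image fun i => i.1).biUnion t).card = _
        rw [Finset.image_biUnion]
  obtain ⟨f, hf_inj, hf_mem⟩ :=
    (Finset.all_card_le_biUnion_card_iff_exists_injective fun i : F => t i.1).1 hall_occurrences
  refine ⟨Finset.univ.val.map fun i : F => (i.1, f i), ?_, ?_, ?_⟩
  · rw [Multiset.map_map]
    exact F.map_univ_coe
  · rw [Multiset.map_map]
    exact Finset.univ.nodup.map hf_inj
  · intro p hp
    obtain ⟨i, -, rfl⟩ := Multiset.mem_map.1 hp
    exact hf_mem i

theorem hasCoveringMatching_iff_forall_card_le [DecidableEq A] [DecidableEq B]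
    {t : A → Finset B} {F : Multiset A} :
    HasCoveringMatching (fun a b => b ∈ t a) F ↔
      ∀ G ≤ F, G.card ≤ (G.toFinset.biUnion t).card :=
  ⟨fun hF _ hGF => (hF.of_le hGF).card_le_card_biUnion, hasCoveringMatching_of_forall_card_le⟩

end CoveringMatching

lemma mem_mvars {F : Multiset (Clause D)} {v : V} :
    v ∈ mvars F ↔ ∃ C ∈ F, v ∈ FinFn.vars C := by
  simp only [mvars, Finset.mem_sup, Multiset.mem_toFinset]

lemma mvars_add (F G : Multiset (Clause D)) : mvars (F + G) = mvars F ∪ mvars G := by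
  rw [mvars, Multiset.toFinset_add, Finset.sup_union]
  rfl

lemma mvars_subset_mvars_cons (C : Clause D) (F : Multiset (Clause D)) :
    mvars F ⊆ mvars (C ::ₘ F) := by
  rw [← Multiset.singleton_add, mvars_add]
  exact Finset.subset_union_right

omit [DecidableEq α] in
lemma exists_mem_of_mem_vars {s : FinFn D} {v : V} (hv : v ∈ s.vars) : ∃ ε, (v, ε) ∈ s.1 := by
  obtain ⟨⟨_, ε⟩, hl, rfl⟩ := Finset.mem_image.1 hv
  exact ⟨ε, hl⟩

omit [DecidableEq α] in
lemma mem_vars_of_mem {s : FinFn D} {v : V} {ε : α} (h : (v, ε) ∈ s.1) : v ∈ s.vars :=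
  Finset.mem_image_of_mem Prod.fst h

omit [DecidableEq α] in
lemma domain_nonempty_of_mem_vars {s : FinFn D} {v : V} (hv : v ∈ s.vars) : (D v).Nonempty :=
  let ⟨ε, h⟩ := exists_mem_of_mem_vars hv
  ⟨ε, s.2.1 (v, ε) h⟩

/-- The variable-nodes of the clause–variable graph that are copies of variables in `X`. -/
def varNodes (D : V → Finset α) (X : Finset V) : Finset (V × ℕ) :=
  (X.sigma fun v => Finset.range ((D v).card - 1)).map (Equiv.sigmaEquivProd V ℕ).toEmbedding

omit [DecidableEq V] [DecidableEq α] in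
lemma mem_varNodes {X : Finset V} {n : V × ℕ} :
    n ∈ varNodes D X ↔ n.1 ∈ X ∧ n.2 < (D n.1).card - 1 := by
  simp [varNodes, Finset.mem_map_equiv]

omit [DecidableEq V] [DecidableEq α] in
lemma card_varNodes (X : Finset V) : (varNodes D X).card = ∑ v ∈ X, ((D v).card - 1) := by
  simp [varNodes]

omit [DecidableEq V] [DecidableEq α] in
lemma varNodes_mono {X Y : Finset V} (hXY : X ⊆ Y) : varNodes D X ⊆ varNodes D Y :=
  Finset.map_subset_map.2 (Finset.sigma_mono hXY fun _ => subset_rfl)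

omit [DecidableEq α] in
lemma card_varNodes_union (X Y : Finset V) :
    (varNodes D (X ∪ Y)).card = (varNodes D X).card + (varNodes D (Y \ X)).card := by
  simp only [card_varNodes]
  rw [← Finset.union_sdiff_self_eq_union, Finset.sum_union Finset.disjoint_sdiff]

lemma biUnion_varNodes_vars_sdiff (F : Multiset (Clause D)) (U : Finset V) :
    (F.toFinset.biUnion fun C => varNodes D (C.vars \ U)) = varNodes D (mvars F \ U) := by
  ext n
  simp only [Finset.mem_biUnion, Multiset.mem_toFinset, mem_varNodes, Finset.mem_sdiff, mem_mvars]
  tauto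

lemma delta_eq_card_sub_card_varNodes (F : Multiset (Clause D)) :
    delta F = (F.card : ℤ) - (varNodes D (mvars F)).card := by
  rw [delta, card_varNodes, Nat.cast_sum]
  congr 1
  refine Finset.sum_congr rfl fun v hv => ?_
  obtain ⟨C, -, hvC⟩ := mem_mvars.1 hv
  rw [Nat.cast_sub (domain_nonempty_of_mem_vars hvC).card_pos, Nat.cast_one]

lemma delta_add (F G : Multiset (Clause D)) :
    delta (F + G) = delta F + G.card - (varNodes D (mvars G \ mvars F)).card := by
  simp only [delta_eq_card_sub_card_varNodes, mvars_add, card_varNodes_union, Multiset.card_add]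
  push_cast
  ring

lemma delta_cons_le (C : Clause D) (F : Multiset (Clause D)) :
    delta (C ::ₘ F) ≤ delta F + 1 := by
  have hcard := Finset.card_le_card (varNodes_mono (D := D) (mvars_subset_mvars_cons C F))
  rw [delta_eq_card_sub_card_varNodes, delta_eq_card_sub_card_varNodes, Multiset.card_cons]
  push_cast
  linarith [(Nat.cast_le (α := ℤ)).2 hcard]

lemma delta_le_deltaStar {F G : Multiset (Clause D)} (hGF : G ≤ F) : delta G ≤ deltaStar F :=
  Finset.le_sup' delta (Multiset.mem_toFinset.2 (Multiset.mem_powerset.2 hGF))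

lemma exists_tight (F : Multiset (Clause D)) : ∃ G, Tight F G := by
  obtain ⟨G, hG, hGF⟩ := Finset.exists_mem_eq_sup' (powerset_toFinset_nonempty F) delta
  exact ⟨G, Multiset.mem_powerset.1 (Multiset.mem_toFinset.1 hG), hGF.symm⟩

/-- The clause–variable graph of `F` has a matching covering all clause-nodes and using only copies
of variables outside `U`; for `U = ∅` this is matching satisfiability. -/
def MatchingSatAvoiding (U : Finset V) (F : Multiset (Clause D)) : Prop :=
  HasCoveringMatching (fun C n => n ∈ varNodes D (FinFn.vars C \ U)) F

lemma matchingSatAvoiding_iff_forall_card_le {U : Finset V} {F : Multiset (Clause D)} :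
    MatchingSatAvoiding U F ↔ ∀ G ≤ F, G.card ≤ (varNodes D (mvars G \ U)).card := by
  simp only [MatchingSatAvoiding, hasCoveringMatching_iff_forall_card_le,
    biUnion_varNodes_vars_sdiff]

omit [DecidableEq α] in
lemma matchingSat_iff_hasCoveringMatching {F : Multiset (Clause D)} :
    MatchingSat F ↔ HasCoveringMatching
      (fun (C : Clause D) (n : V × ℕ) => n.1 ∈ C.vars ∧ n.2 < (D n.1).card - 1) F :=
  Iff.rfl

omit [DecidableEq α] in
lemma matchingSat_iff_matchingSatAvoiding_empty {F : Multiset (Clause D)} :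
    MatchingSat F ↔ MatchingSatAvoiding ∅ F := by
  simp only [matchingSat_iff_hasCoveringMatching, MatchingSatAvoiding, Finset.sdiff_empty,
    mem_varNodes]

theorem matchingSat_iff_forall_delta_nonpos {F : Multiset (Clause D)} :
    MatchingSat F ↔ ∀ G ≤ F, delta G ≤ 0 := by
  simp only [matchingSat_iff_matchingSatAvoiding_empty, matchingSatAvoiding_iff_forall_card_le,
    Finset.sdiff_empty, delta_eq_card_sub_card_varNodes, sub_nonpos, Nat.cast_le]

lemma Tight.matchingSatAvoiding_sub {F G : Multiset (Clause D)} (hG : Tight F G) :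
    MatchingSatAvoiding (mvars G) (F - G) := by
  refine matchingSatAvoiding_iff_forall_card_le.2 fun H hH => ?_
  have hGH : G + H ≤ F := (add_le_add_right hH G).trans_eq (add_tsub_cancel_of_le hG.1)
  have hdelta : delta (G + H) ≤ delta G := (delta_le_deltaStar hGH).trans_eq hG.2.symm
  rw [delta_add] at hdelta
  omega

omit [DecidableEq α] in
lemma exists_finFn_vars_eq {W : Finset V} {p : V → α → Prop}
    (h : ∀ v ∈ W, ∃ ε ∈ D v, p v ε) :
    ∃ φ : FinFn D, φ.vars = W ∧ ∀ v ε, (v, ε) ∈ φ.1 → p v ε := by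
  choose f hf_mem hf_p using h
  let graph : Finset (V × α) := W.attach.image fun v => (v.1, f v.1 v.2)
  have mem_graph {v : V} {ε : α} : (v, ε) ∈ graph ↔ ∃ hv : v ∈ W, f v hv = ε := by
    simp [graph]
  refine ⟨⟨graph, fun q hq => ?_, fun q hq r hr hqr => ?_⟩, ?_, fun v ε hq => ?_⟩
  · obtain ⟨hqW, hfq⟩ := mem_graph.1 hq
    exact hfq ▸ hf_mem q.1 hqW
  · obtain ⟨hqW, hfq⟩ := mem_graph.1 hq
    obtain ⟨hrW, hfr⟩ := mem_graph.1 hr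
    refine Prod.ext hqr ?_
    rw [← hfq, ← hfr]
    congr 1
  · simp only [FinFn.vars, graph, Finset.image_image, Function.comp_def]
    exact W.attach_image_val
  · obtain ⟨hvW, hfv⟩ := mem_graph.1 hq
    exact hfv ▸ hf_p v hvW

omit [DecidableEq V] [DecidableEq α] in
lemma exists_value_not_falsified {P : Multiset (Clause D × (V × ℕ))}
    (hnodup : (P.map Prod.snd).Nodup) (hlt : ∀ p ∈ P, p.2.2 < (D p.2.1).card - 1)
    {v : V} (hv : (D v).Nonempty) :
    ∃ ε ∈ D v, ∀ p ∈ P, p.2.1 = v → (v, ε) ∉ p.1.1 := by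
  by_contra! hforbidden
  -- Pigeonhole: each value forbidden by a clause matched to `v` occupies its own copy of `v`.
  have hcopy : ∀ ε ∈ D v, ∃ k < (D v).card - 1, ∃ C : Clause D, (C, (v, k)) ∈ P ∧ (v, ε) ∈ C.1 := by
    intro ε hε
    obtain ⟨⟨C, v', k⟩, hp, rfl, hC⟩ := hforbidden ε hε
    exact ⟨k, hlt _ hp, C, hp, hC⟩
  choose! copy hcopy_lt hclause using hcopy
  obtain ⟨ε, hε, ε', hε', hne, hcopy_eq⟩ :=
    Finset.exists_ne_map_eq_of_card_lt_of_maps_to (f := copy)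
      (t := Finset.range ((D v).card - 1))
      (by rw [Finset.card_range]; exact Nat.sub_one_lt hv.card_pos.ne')
      fun ε hε => Finset.mem_coe.2 (Finset.mem_range.2 (hcopy_lt ε hε))
  obtain ⟨C, hCP, hεC⟩ := hclause ε hε
  obtain ⟨C', hCP', hεC'⟩ := hclause ε' hε'
  obtain rfl : C = C' := congrArg Prod.fst <|
    Multiset.inj_on_of_nodup_map hnodup _ hCP _ hCP' (congrArg (Prod.mk v) hcopy_eq)
  exact hne (congrArg Prod.snd (C.2.2 _ hεC _ hεC' rfl))

lemma MatchingSatAvoiding.exists_matchingSatisfying {U : Finset V} {F : Multiset (Clause D)}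
    (hF : MatchingSatAvoiding U F) :
    ∃ φ : PAssign D, φ.vars = mvars F \ U ∧ MatchingSatisfying φ F := by
  obtain ⟨P, rfl, hnodup, hadj⟩ := hF
  simp only [mem_varNodes, Finset.mem_sdiff] at hadj
  have hvalue : ∀ v ∈ mvars (P.map Prod.fst) \ U,
      ∃ ε ∈ D v, ∀ p ∈ P, p.2.1 = v → (v, ε) ∉ p.1.1 := by
    intro v hv
    obtain ⟨C, -, hvC⟩ := mem_mvars.1 (Finset.mem_sdiff.1 hv).1
    exact exists_value_not_falsified hnodup (fun p hp => (hadj p hp).2)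
      (domain_nonempty_of_mem_vars hvC)
  obtain ⟨φ, hφ_vars, hφ_free⟩ := exists_finFn_vars_eq hvalue
  refine ⟨φ, hφ_vars, P, rfl, hnodup, fun p hp => ?_⟩
  obtain ⟨⟨hv_vars, hvU⟩, hlt⟩ := hadj p hp
  obtain ⟨ε, hε⟩ := exists_mem_of_mem_vars hv_vars
  have hvφ : p.2.1 ∈ φ.vars := hφ_vars ▸ Finset.mem_sdiff.2
    ⟨mem_mvars.2 ⟨p.1, Multiset.mem_map_of_mem _ hp, hv_vars⟩, hvU⟩
  obtain ⟨value, hvalue⟩ := exists_mem_of_mem_vars hvφ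
  refine ⟨hlt, ε, hε, value, hvalue, ?_⟩
  rintro (rfl : value = ε)
  exact hφ_free _ _ hvalue p hp rfl hε

omit [DecidableEq α] in
lemma MatchingSatAvoiding.exists_mem_vars_notMem {U : Finset V} {F : Multiset (Clause D)}
    (hF : MatchingSatAvoiding U F) {C : Clause D} (hC : C ∈ F) : ∃ v ∈ C.vars, v ∉ U :=
  let ⟨n, hn⟩ := HasCoveringMatching.exists_rel hF hC
  ⟨n.1, Finset.mem_sdiff.1 (mem_varNodes.1 hn).1⟩

lemma MatchingSatAvoiding.touchedBy_add {F G : Multiset (Clause D)}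
    (hF : MatchingSatAvoiding (mvars G) F) : touchedBy (G + F) (mvars F \ mvars G) = F := by
  have hG_untouched : touchedBy G (mvars F \ mvars G) = 0 := by
    refine Multiset.filter_eq_nil.2 fun C hC ⟨v, hv⟩ => ?_
    rw [Finset.mem_inter, Finset.mem_sdiff] at hv
    exact hv.2.2 (mem_mvars.2 ⟨C, hC, hv.1⟩)
  have hF_touched : touchedBy F (mvars F \ mvars G) = F := by
    refine Multiset.filter_eq_self.2 fun C hC => ?_
    obtain ⟨v, hvC, hvG⟩ := hF.exists_mem_vars_notMem hC
    exact ⟨v, Finset.mem_inter.2 ⟨hvC, Finset.mem_sdiff.2 ⟨mem_mvars.2 ⟨C, hC, hvC⟩, hvG⟩⟩⟩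
  calc touchedBy (G + F) (mvars F \ mvars G)
    _ = touchedBy G (mvars F \ mvars G) + touchedBy F (mvars F \ mvars G) :=
      Multiset.filter_add ..
    _ = F := by rw [hG_untouched, hF_touched, zero_add]

theorem MatchingLean.eq_of_tight {F G : Multiset (Clause D)} (hF : MatchingLean F)
    (hG : Tight F G) : G = F := by
  have havoid := hG.matchingSatAvoiding_sub
  obtain ⟨H, rfl⟩ := Multiset.le_iff_exists_add.1 hG.1
  rw [add_tsub_cancel_left] at havoid
  by_contra hne
  obtain ⟨C, hC⟩ : ∃ C, C ∈ H := Multiset.exists_mem_of_ne_zero fun h => hne (by rw [h, add_zero])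
  obtain ⟨v, hvC, hvG⟩ := havoid.exists_mem_vars_notMem hC
  have hvH : v ∈ mvars H := mem_mvars.2 ⟨C, hC, hvC⟩
  obtain ⟨φ, hφ_vars, hφ_sat⟩ := havoid.exists_matchingSatisfying
  refine hF ⟨φ, ?_, v, ?_⟩
  · rwa [IsMatchingAutarky, hφ_vars, havoid.touchedBy_add]
  · rw [hφ_vars, mvars_add]
    exact Finset.mem_inter.2 ⟨Finset.mem_sdiff.2 ⟨hvH, hvG⟩, Finset.mem_union_right _ hvH⟩

theorem MatchingLean.delta_lt_of_lt {F G : Multiset (Clause D)} (hF : MatchingLean F)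
    (hGF : G < F) : delta G < delta F := by
  have hF_tight : Tight F F := by
    obtain ⟨H, hH⟩ := exists_tight F
    rwa [hF.eq_of_tight hH] at hH
  refine lt_of_le_of_ne ((delta_le_deltaStar hGF.le).trans_eq hF_tight.2.symm) fun heq => ?_
  exact hGF.ne (hF.eq_of_tight ⟨hGF.le, heq.trans hF_tight.2⟩)

omit [DecidableEq α] in
lemma touchedBy_le (F : Multiset (Clause D)) (W : Finset V) : touchedBy F W ≤ F :=
  Multiset.filter_le _ F

theorem IsMatchingAutarky.matchingSat {φ : PAssign D} {F : Multiset (Clause D)}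
    (hφ : IsMatchingAutarky φ F) (hrest : MatchingSat (F - touchedBy F φ.vars)) :
    MatchingSat F := by
  have huntouched : ∀ C ∈ F - touchedBy F φ.vars, ¬ (FinFn.vars C ∩ φ.vars).Nonempty := by
    intro C hC
    rw [touchedBy, Multiset.sub_filter_eq_filter_not] at hC
    exact (Multiset.mem_filter.1 hC).2
  have htouched : HasCoveringMatching
      (fun (C : Clause D) (n : V × ℕ) => n.2 < (D n.1).card - 1 ∧ EdgeSat φ C n.1)
      (touchedBy F φ.vars) := hφ
  rw [matchingSat_iff_hasCoveringMatching] at hrest ⊢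
  have hunion := htouched.add hrest fun C _ C' hC' n ⟨_, _, _, _, hn, _⟩ hn' =>
    huntouched C' hC' ⟨n.1, Finset.mem_inter.2 ⟨hn'.1, mem_vars_of_mem hn⟩⟩
  rw [add_tsub_cancel_of_le (touchedBy_le F φ.vars)] at hunion
  refine hunion.mono ?_
  rintro C n (⟨hlt, _, hlit, -⟩ | hadj)
  · exact ⟨mem_vars_of_mem hlit, hlt⟩
  · exact hadj

theorem matchingLean_of_min_matching_unsat {F : Multiset (Clause D)}
    (hunsat : ¬ MatchingSat F) (hmin : ∀ G < F, MatchingSat G) : MatchingLean F := by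
  rintro ⟨φ, hφ, v, hv⟩
  obtain ⟨hvφ, hvF⟩ := Finset.mem_inter.1 hv
  obtain ⟨C, hC, hvC⟩ := mem_mvars.1 hvF
  have hC_touched : C ∈ touchedBy F φ.vars :=
    Multiset.mem_filter.2 ⟨hC, v, Finset.mem_inter.2 ⟨hvC, hvφ⟩⟩
  have htouched_pos : 0 < touchedBy F φ.vars :=
    pos_iff_ne_zero.2 fun h => Multiset.notMem_zero C (h ▸ hC_touched)
  have hrest_lt : F - touchedBy F φ.vars < F :=
    (lt_add_of_pos_right _ htouched_pos).trans_eq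
      (tsub_add_cancel_of_le (touchedBy_le F φ.vars))
  exact hunsat (hφ.matchingSat (hmin _ hrest_lt))

theorem delta_eq_one_of_min_matching_unsat {F : Multiset (Clause D)}
    (hunsat : ¬ MatchingSat F) (hmin : ∀ G < F, MatchingSat G) : delta F = 1 := by
  have hproper {G} (hG : G < F) : delta G ≤ 0 :=
    matchingSat_iff_forall_delta_nonpos.1 (hmin G hG) G le_rfl
  have hpos : 0 < delta F := by
    by_contra! hle
    refine hunsat (matchingSat_iff_forall_delta_nonpos.2 fun G hG => ?_)
    obtain rfl | hlt := hG.eq_or_lt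
    exacts [hle, hproper hlt]
  have hne : F ≠ 0 := by
    rintro rfl
    exact hpos.ne rfl
  obtain ⟨C, hC⟩ := Multiset.exists_mem_of_ne_zero hne
  obtain ⟨G, rfl⟩ := Multiset.exists_cons_of_mem hC
  have hle := delta_cons_le C G
  have hG := hproper (Multiset.lt_cons_self G C)
  omega

lemma forall_ssubset_iff_forall_lt_val {A : Type*} (p : Multiset A → Prop) (F : Finset A) :
    (∀ F' ⊂ F, p F'.val) ↔ ∀ G < F.val, p G :=
  ⟨fun h G hG => h ⟨G, Multiset.nodup_of_le hG.le F.nodup⟩ (Finset.val_lt_iff.1 hG),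
    fun h _ hF' => h _ (Finset.val_lt_iff.2 hF')⟩

theorem matchingLean_deficiency_one_iff_min_matching_unsat_general (F : Multiset (Clause D)) :
    (MatchingLean F ∧ delta F = 1) ↔ (¬ MatchingSat F ∧ ∀ G < F, MatchingSat G) := by
  constructor
  · rintro ⟨hlean, hdelta⟩
    constructor
    · intro hsat
      have hle := matchingSat_iff_forall_delta_nonpos.1 hsat F le_rfl
      omega
    · intro G hG
      refine matchingSat_iff_forall_delta_nonpos.2 fun H hH => ?_
      have hlt := hlean.delta_lt_of_lt (hH.trans_lt hG)
      omega
  · rintro ⟨hunsat, hmin⟩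
    exact ⟨matchingLean_of_min_matching_unsat hunsat hmin,
      delta_eq_one_of_min_matching_unsat hunsat hmin⟩

/-- a generalised clause-set is matching lean with `δ(F) = 1` iff it
is minimally matching unsatisfiable (not matching satisfiable, while every proper
subset is matching satisfiable). -/
theorem matchingLean_deficiency_one_iff_min_matching_unsat
    (hD : ∀ v, (D v).Nonempty) (F : Finset (Clause D)) :
    (MatchingLean F.val ∧ delta F.val = 1) ↔
      (¬ MatchingSat F.val ∧ ∀ F' ⊂ F, MatchingSat F'.val) := by
  rw [forall_ssubset_iff_forall_lt_val MatchingSat F]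
  exact matchingLean_deficiency_one_iff_min_matching_unsat_general F.val

end GCLS
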